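/- arXiv:2603.20046 — 2 statements merged into one kernel-verified Lean document; each statement's English description precedes it below -/
import Mathlib

section
/- Let Ω be a nonempty finite type, let E be a real inner product space, let p : Ω → ℝ be a probability mass function (p(τ) ≥ 0 and ∑_{τ} p(τ) = 1), let g : Ω → E, and let R_I, R_T : Ω → ℝ be two reward functions whose gap is uniformly bounded: |R_I(τ) - R_T(τ)| ≤ W for all τ ∈ Ω, where W ≥ 0. Define the policy gradients g_{R_I} = ∑_{τ} p(τ) • (R_I(τ) • g(τ)) and g_{R_T} = ∑_{τ} p(τ) • (R_T(τ) • g(τ)). Then ‖g_{R_I} - g_{R_T}‖ ≤ √(∑_{τ} p(τ)·‖g(τ)‖²) · W. -/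
/-- If the pointwise gap between the ideal reward `R_I` and the estimated reward `R_T`
is uniformly bounded by `W`, then the gap between the corresponding policy gradients is
bounded by the weighted L² norm of the score times `W`. -/
theorem policy_gradient_gap_le
    {Ω : Type*} [Fintype Ω] [Nonempty Ω]
    {E : Type*} [NormedAddCommGroup E] [InnerProductSpace ℝ E]
    (p : Ω → ℝ) (hp0 : ∀ τ, 0 ≤ p τ) (hp1 : ∑ τ, p τ = 1)
    (g : Ω → E) (R_I R_T : Ω → ℝ) (W : ℝ) (hW : 0 ≤ W)
    (hgap : ∀ τ, |R_I τ - R_T τ| ≤ W) :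
    ‖(∑ τ, p τ • (R_I τ • g τ)) - ∑ τ, p τ • (R_T τ • g τ)‖ ≤
      Real.sqrt (∑ τ, p τ * ‖g τ‖ ^ 2) * W := by
  have hJ : ∑ τ, p τ * ‖g τ‖ ≤ Real.sqrt (∑ τ, p τ * ‖g τ‖ ^ 2) := by
    apply Real.le_sqrt_of_sq_le
    exact Real.pow_arith_mean_le_arith_mean_pow Finset.univ p (fun τ => ‖g τ‖) (fun τ _ => hp0 τ) hp1
      (fun τ _ => norm_nonneg _) 2
  rw [← Finset.sum_sub_distrib]
  calc ‖∑ τ, (p τ • (R_I τ • g τ) - p τ • (R_T τ • g τ))‖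
      ≤ ∑ τ, ‖p τ • (R_I τ • g τ) - p τ • (R_T τ • g τ)‖ := norm_sum_le _ _
    _ ≤ ∑ τ, (p τ * ‖g τ‖) * W := by
        apply Finset.sum_le_sum
        intro τ _
        rw [← smul_sub, ← sub_smul, norm_smul, norm_smul, Real.norm_eq_abs, Real.norm_eq_abs,
          abs_of_nonneg (hp0 τ), mul_assoc, mul_comm ‖g τ‖ W]
        exact mul_le_mul_of_nonneg_left
          (mul_le_mul_of_nonneg_right (hgap τ) (norm_nonneg _)) (hp0 τ)
    _ = (∑ τ, p τ * ‖g τ‖) * W := by rw [Finset.sum_mul]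
    _ ≤ _ := mul_le_mul_of_nonneg_right hJ hW
end

section
/- Let Ω be a nonempty finite type (the trajectory space), let E be a real inner product space, let p : Ω → ℝ be a probability mass function (p(τ) ≥ 0 and ∑_{τ} p(τ) = 1), and let g : Ω → E be the score map. Let there be K rubric items with nonnegative weights w : Fin K → ℝ (w(j) ≥ 0 for all j), and let S : Ω → Finset (Fin K) assign to each trajectory the set of rubrics it satisfies. Define the ideal reward R_I(τ) = ∑_{j} w(j) and the estimated reward R_T(τ) = ∑_{j ∈ S(τ)} w(j). Suppose there is a fixed set N ⊆ Fin K of unmet rubrics such that every rubric unsatisfied by any trajectory lies in N, i.e., (Fin K) \ S(τ) ⊆ N for all τ ∈ Ω. Then the gradient gap satisfies ‖∑_{τ} p(τ) • (R_I(τ) • g(τ)) - ∑_{τ} p(τ) • (R_T(τ) • g(τ))‖ ≤ √(∑_{τ} p(τ)·‖g(τ)‖²) · ∑_{j ∈ N} w(j), i.e., the deviation of the estimated policy gradient from the ideal one is upper-bounded by the L² norm of the score times the ℓ¹ norm of the weights of the unmet rubrics. -/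
/-- Rubric-based gradient gap bound: the deviation of the estimated policy gradient
(using reward `R_T τ = ∑ j ∈ S τ, w j`) from the ideal policy gradient (using
`R_I τ = ∑ j, w j`) is bounded by the weighted L² norm of the score times the ℓ¹ norm
of the weights of the unmet rubrics `N`. -/
theorem rubric_policy_gradient_gap_le
    {Ω : Type*} [Fintype Ω] [Nonempty Ω]
    {E : Type*} [NormedAddCommGroup E] [InnerProductSpace ℝ E]
    (p : Ω → ℝ) (hp0 : ∀ τ, 0 ≤ p τ) (hp1 : ∑ τ, p τ = 1)
    (g : Ω → E)
    {K : ℕ} (w : Fin K → ℝ) (hw : ∀ j, 0 ≤ w j)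
    (S : Ω → Finset (Fin K))
    (N : Finset (Fin K))
    (hN : ∀ τ, Finset.univ \ S τ ⊆ N) :
    ‖(∑ τ, p τ • ((∑ j, w j) • g τ)) -
        ∑ τ, p τ • ((∑ j ∈ S τ, w j) • g τ)‖ ≤
      Real.sqrt (∑ τ, p τ * ‖g τ‖ ^ 2) * ∑ j ∈ N, w j := by
  have hsplit : ∀ τ, (∑ j, w j) - ∑ j ∈ S τ, w j = ∑ j ∈ Finset.univ \ S τ, w j := by
    intro τ
    rw [← Finset.sum_sdiff (Finset.subset_univ (S τ))]
    ring
  have hW : 0 ≤ ∑ j ∈ N, w j := Finset.sum_nonneg fun j _ => hw j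
  have hjensen : ∑ τ, p τ * ‖g τ‖ ≤ Real.sqrt (∑ τ, p τ * ‖g τ‖ ^ 2) := by
    apply Real.le_sqrt_of_sq_le
    exact Real.pow_arith_mean_le_arith_mean_pow Finset.univ p (fun τ => ‖g τ‖)
      (fun τ _ => hp0 τ) hp1 (fun τ _ => norm_nonneg _) 2
  rw [← Finset.sum_sub_distrib]
  calc _ ≤ ∑ τ, ‖p τ • ((∑ j, w j) • g τ) - p τ • ((∑ j ∈ S τ, w j) • g τ)‖ :=
        norm_sum_le _ _
    _ ≤ ∑ τ, (p τ * ‖g τ‖) * ∑ j ∈ N, w j := by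
        refine Finset.sum_le_sum fun τ _ => ?_
        rw [← smul_sub, ← sub_smul, hsplit, norm_smul, norm_smul, Real.norm_eq_abs,
          Real.norm_eq_abs, abs_of_nonneg (hp0 τ),
          abs_of_nonneg (Finset.sum_nonneg fun j _ => hw j), mul_assoc, mul_comm ‖g τ‖]
        have := Finset.sum_le_sum_of_subset_of_nonneg (hN τ) (fun j _ _ => hw j)
        have := hp0 τ
        gcongr
    _ = (∑ τ, p τ * ‖g τ‖) * ∑ j ∈ N, w j := by rw [Finset.sum_mul]
    _ ≤ _ := mul_le_mul_of_nonneg_right hjensen hW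
end
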